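/- With the drifted one-step Bellman setup, the residual error of the drifted Taylor estimator satisfies ΔY − ΔŶ^drift = δ − E[δ | 𝒢] almost surely, where ΔY := V'(X') − V(X). -/

import Mathlib

open MeasureTheory ProbabilityTheory Matrix

/-- The standard Gaussian measure on `ℝⁿ` (coordinates i.i.d. `N(0,1)`). -/
noncomputable def stdGaussian (n : ℕ) : Measure (Fin n → ℝ) :=
  Measure.pi fun _ => gaussianReal 0 1

/-- The gradient of `f : ℝⁿ → ℝ`, as a vector of partial derivatives. -/
noncomputable def grad {n : ℕ} (f : (Fin n → ℝ) → ℝ) (x : Fin n → ℝ) : Fin n → ℝ :=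
  fun i => fderiv ℝ f x (Pi.single i 1)

/-- The Hessian matrix of `f : ℝⁿ → ℝ`. -/
noncomputable def hess {n : ℕ} (f : (Fin n → ℝ) → ℝ) (x : Fin n → ℝ) :
    Matrix (Fin n) (Fin n) ℝ :=
  Matrix.of fun i j => fderiv ℝ (fun y => fderiv ℝ f y (Pi.single j 1)) x (Pi.single i 1)

/-!
Conditionally on `𝒢` everything but `W` is frozen, so `E[δ | 𝒢]` is computed by integrating out `W`:
it is `∫ V'(X + F(X) + Σ(X) w) dγ(w) = V(X) - L(X)` minus the `γ`-mean of the Taylor polynomial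
`q(w + D)`, where `q(w) = Ȳ + ⟨Z̄, w⟩ + ½ ⟨w, M̄ w⟩`. Re-expanding `q` around `D` and using that
`γ` has mean zero and identity covariance, this mean is `q(D) + ½ tr M̄`. The drifted estimator is
exactly `-L(X)` plus the centred polynomial `q(W^P) - ∫ q(w + D) dγ(w)`, so subtracting it from
`V'(X') - V(X)` leaves `δ - E[δ | 𝒢]`.
-/

section IndependentNoise

variable {Ω β E F : Type*} {mΩ : MeasurableSpace Ω} {mβ : MeasurableSpace β}
  {mE : MeasurableSpace E} [NormedAddCommGroup F]
  {P : Measure Ω} [IsFiniteMeasure P] {U : Ω → β} {W : Ω → E} {f : β → E → F}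

lemma integrable_uncurry_of_indepFun (hU : Measurable U) (hW : Measurable W)
    (hUW : IndepFun U W P) (hf : StronglyMeasurable (Function.uncurry f))
    (hfi : Integrable (fun ω => f (U ω) (W ω)) P) :
    Integrable (Function.uncurry f) ((P.map U).prod (P.map W)) := by
  rw [← hUW.map_prod_eq_prod_map_map hU.aemeasurable hW.aemeasurable]
  exact (integrable_map_measure hf.aestronglyMeasurable (hU.prodMk hW).aemeasurable).2 hfi

lemma ae_integrable_of_indepFun (hU : Measurable U) (hW : Measurable W)
    (hUW : IndepFun U W P) (hf : StronglyMeasurable (Function.uncurry f))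
    (hfi : Integrable (fun ω => f (U ω) (W ω)) P) : ∀ᵐ ω ∂P, Integrable (f (U ω)) (P.map W) :=
  ae_of_ae_map hU.aemeasurable (integrable_uncurry_of_indepFun hU hW hUW hf hfi).prod_right_ae

variable [NormedSpace ℝ F]

lemma setIntegral_integral_of_indepFun (hU : Measurable U) (hW : Measurable W)
    (hUW : IndepFun U W P) (hf : StronglyMeasurable (Function.uncurry f))
    (hfi : Integrable (fun ω => f (U ω) (W ω)) P) {t : Set β} (ht : MeasurableSet t) :
    ∫ ω in U ⁻¹' t, ∫ w, f (U ω) w ∂P.map W ∂P = ∫ ω in U ⁻¹' t, f (U ω) (W ω) ∂P := by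
  calc ∫ ω in U ⁻¹' t, ∫ w, f (U ω) w ∂P.map W ∂P
      = ∫ u in t, ∫ w, f u w ∂P.map W ∂P.map U :=
        (setIntegral_map ht hf.integral_prod_right.aestronglyMeasurable hU.aemeasurable).symm
    _ = ∫ p in t ×ˢ Set.univ, Function.uncurry f p ∂(P.map U).prod (P.map W) := by
        rw [setIntegral_prod _ (integrable_uncurry_of_indepFun hU hW hUW hf hfi).integrableOn,
          Measure.restrict_univ]
        rfl
    _ = ∫ ω in U ⁻¹' t, f (U ω) (W ω) ∂P := by
        rw [← hUW.map_prod_eq_prod_map_map hU.aemeasurable hW.aemeasurable,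
          setIntegral_map (ht.prod .univ) hf.aestronglyMeasurable (hU.prodMk hW).aemeasurable,
          Set.mk_preimage_prod, Set.preimage_univ, Set.inter_univ]
        rfl

lemma condExp_comap_of_indepFun [CompleteSpace F] (hU : Measurable U) (hW : Measurable W)
    (hUW : IndepFun U W P) (hf : StronglyMeasurable (Function.uncurry f))
    (hfi : Integrable (fun ω => f (U ω) (W ω)) P) :
    P[fun ω => f (U ω) (W ω) | mβ.comap U] =ᵐ[P] fun ω => ∫ w, f (U ω) w ∂P.map W := by
  have hinner : Integrable (fun ω => ∫ w, f (U ω) w ∂P.map W) P :=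
    (integrable_uncurry_of_indepFun hU hW hUW hf hfi).integral_prod_left.comp_measurable hU
  refine (ae_eq_condExp_of_forall_setIntegral_eq hU.comap_le hfi
    (fun _ _ _ => hinner.integrableOn) ?_ ?_).symm
  · rintro _ ⟨t, ht, rfl⟩ -
    exact setIntegral_integral_of_indepFun hU hW hUW hf hfi ht
  · exact (hf.integral_prod_right.comp_measurable (comap_measurable U)).aestronglyMeasurable

end IndependentNoise

section IndependentSigmaAlgebra

variable {Ω E F : Type*} {𝒢 mΩ : MeasurableSpace Ω} {mE : MeasurableSpace E}
  [NormedAddCommGroup F] {P : Measure Ω} {W : Ω → E} {f : Ω → E → F}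

-- `𝒢` is generated by the identity, seen as a map into `Ω` equipped with `𝒢`.
lemma indepFun_id_of_indep (hind : Indep (mE.comap W) 𝒢 P) : @IndepFun _ _ _ mΩ 𝒢 mE id W P :=
  (@IndepFun_iff_Indep _ _ _ mΩ 𝒢 mE id W P).2 (MeasurableSpace.comap_id.symm ▸ hind.symm)

variable [IsFiniteMeasure P]

lemma ae_integrable_of_indep (h𝒢 : 𝒢 ≤ mΩ) (hW : Measurable W) (hind : Indep (mE.comap W) 𝒢 P)
    (hf : StronglyMeasurable[𝒢.prod mE] (Function.uncurry f))
    (hfi : Integrable (fun ω => f ω (W ω)) P) : ∀ᵐ ω ∂P, Integrable (f ω) (P.map W) :=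
  ae_integrable_of_indepFun (measurable_id'' h𝒢) hW (indepFun_id_of_indep hind) hf hfi

lemma condExp_of_indep [NormedSpace ℝ F] [CompleteSpace F] (h𝒢 : 𝒢 ≤ mΩ) (hW : Measurable W)
    (hind : Indep (mE.comap W) 𝒢 P) (hf : StronglyMeasurable[𝒢.prod mE] (Function.uncurry f))
    (hfi : Integrable (fun ω => f ω (W ω)) P) :
    P[fun ω => f ω (W ω) | 𝒢] =ᵐ[P] fun ω => ∫ w, f ω w ∂P.map W := by
  have h := condExp_comap_of_indepFun (measurable_id'' h𝒢) hW (indepFun_id_of_indep hind) hf hfi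
  rwa [MeasurableSpace.comap_id] at h

end IndependentSigmaAlgebra

/-- A measure on `ℝ^ι` is in centred isotropic position if its coordinates are square integrable
with mean zero and identity covariance matrix; this is what the expectation of a second-order
polynomial of the noise depends on. Total mass one is not part of the definition. -/
structure IsCenteredIsotropic {ι : Type*} [DecidableEq ι] (ν : Measure (ι → ℝ)) : Prop where
  memLp_eval (i : ι) : MemLp (fun w : ι → ℝ => w i) 2 ν
  integral_eval (i : ι) : ∫ w, w i ∂ν = 0
  integral_eval_mul_eval (i j : ι) : ∫ w, w i * w j ∂ν = (1 : Matrix ι ι ℝ) i j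

namespace IsCenteredIsotropic

variable {ι : Type*} [DecidableEq ι] {ν : Measure (ι → ℝ)}

lemma integrable_eval [IsFiniteMeasure ν] (hν : IsCenteredIsotropic ν) (i : ι) :
    Integrable (fun w => w i) ν :=
  (hν.memLp_eval i).integrable one_le_two

lemma integrable_eval_mul_mul_eval (hν : IsCenteredIsotropic ν) (m : ℝ) (i j : ι) :
    Integrable (fun w => w i * (m * w j)) ν :=
  (hν.memLp_eval i).integrable_mul ((hν.memLp_eval j).const_mul m)

variable [Fintype ι]

lemma integrable_dotProduct [IsFiniteMeasure ν] (hν : IsCenteredIsotropic ν) (z : ι → ℝ) :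
    Integrable (fun w => z ⬝ᵥ w) ν :=
  integrable_finsetSum _ fun i _ => (hν.integrable_eval i).const_mul _

lemma integral_dotProduct [IsFiniteMeasure ν] (hν : IsCenteredIsotropic ν) (z : ι → ℝ) :
    ∫ w, z ⬝ᵥ w ∂ν = 0 := by
  simp only [dotProduct, integral_finsetSum _ fun i _ => (hν.integrable_eval i).const_mul (z i),
    integral_const_mul, hν.integral_eval, mul_zero, Finset.sum_const_zero]

lemma integrable_dotProduct_mulVec (hν : IsCenteredIsotropic ν) (M : Matrix ι ι ℝ) :
    Integrable (fun w => w ⬝ᵥ M *ᵥ w) ν := by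
  simp only [dotProduct, mulVec, Finset.mul_sum]
  exact integrable_finsetSum _ fun i _ => integrable_finsetSum _ fun j _ =>
    hν.integrable_eval_mul_mul_eval (M i j) i j

lemma integral_dotProduct_mulVec (hν : IsCenteredIsotropic ν) (M : Matrix ι ι ℝ) :
    ∫ w, w ⬝ᵥ M *ᵥ w ∂ν = M.trace := by
  have hmonomial := fun i j => hν.integrable_eval_mul_mul_eval (M i j) i j
  have hmoment : ∀ i j, ∫ w, w i * (M i j * w j) ∂ν = M i j * (1 : Matrix ι ι ℝ) i j := by
    intro i j
    simp only [mul_left_comm, integral_const_mul, hν.integral_eval_mul_eval]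
  simp only [dotProduct, mulVec, Finset.mul_sum]
  rw [integral_finsetSum _ fun i _ => integrable_finsetSum _ fun j _ => hmonomial i j]
  simp only [integral_finsetSum _ fun j _ => hmonomial _ j, hmoment, Matrix.one_apply, mul_ite,
    mul_one, mul_zero, Finset.sum_ite_eq, Finset.mem_univ, if_true, trace, diag_apply]

end IsCenteredIsotropic

lemma isCenteredIsotropic_pi {ι : Type*} [Fintype ι] [DecidableEq ι] {μ : ι → Measure ℝ}
    [∀ i, IsProbabilityMeasure (μ i)] (hL2 : ∀ i, MemLp id 2 (μ i))
    (hmean : ∀ i, ∫ x, x ∂μ i = 0) (hsq : ∀ i, ∫ x, x ^ 2 ∂μ i = 1) :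
    IsCenteredIsotropic (Measure.pi μ) where
  memLp_eval i := (hL2 i).comp_measurePreserving (measurePreserving_eval μ i)
  integral_eval i := integral_eval.trans (hmean i)
  integral_eval_mul_eval i j := by
    obtain rfl | hij := eq_or_ne i j
    · simp only [← sq, one_apply_eq]
      exact (integral_comp_eval (by fun_prop)).trans (hsq i)
    · have hindep : IndepFun (fun w : ι → ℝ => w i) (fun w => w j) (Measure.pi μ) :=
        (iIndepFun_pi (X := fun _ x => x) fun _ => aemeasurable_id).indepFun hij
      rw [hindep.integral_fun_mul_eq_mul_integral
        (measurable_pi_apply i).aestronglyMeasurable (measurable_pi_apply j).aestronglyMeasurable,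
        integral_eval, hmean, zero_mul, one_apply_ne hij]

instance isProbabilityMeasure_stdGaussian (n : ℕ) : IsProbabilityMeasure (stdGaussian n) :=
  inferInstanceAs (IsProbabilityMeasure (Measure.pi fun _ => gaussianReal 0 1))

lemma integral_sq_gaussianReal_zero (v : NNReal) : ∫ x, x ^ 2 ∂gaussianReal 0 v = v := by
  rw [← variance_of_integral_eq_zero (by fun_prop) integral_id_gaussianReal,
    variance_fun_id_gaussianReal]

lemma isCenteredIsotropic_stdGaussian (n : ℕ) : IsCenteredIsotropic (stdGaussian n) :=
  isCenteredIsotropic_pi (fun _ => memLp_id_gaussianReal 2) (fun _ => integral_id_gaussianReal)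
    fun _ => integral_sq_gaussianReal_zero 1

section SecondOrderPoly

variable {ι : Type*} [Fintype ι]

/-- The polynomial `w ↦ y + ⟨z, w⟩ + ½ ⟨w, M w⟩`, the form of a second-order Taylor expansion
in the noise `w`. The coefficients are free, not tied to the derivatives of a function. -/
noncomputable def secondOrderPoly (y : ℝ) (z : ι → ℝ) (M : Matrix ι ι ℝ) (w : ι → ℝ) : ℝ :=
  y + z ⬝ᵥ w + 1 / 2 * (w ⬝ᵥ M *ᵥ w)

lemma secondOrderPoly_add (y : ℝ) (z : ι → ℝ) (M : Matrix ι ι ℝ) (w d : ι → ℝ) :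
    secondOrderPoly y z M (w + d) =
      secondOrderPoly (secondOrderPoly y z M d) (z + (1 / 2 : ℝ) • (M *ᵥ d + d ᵥ* M)) M w := by
  simp only [secondOrderPoly, mulVec_add, dotProduct_add, add_dotProduct, smul_dotProduct,
    smul_eq_mul, dotProduct_mulVec d M w, dotProduct_comm w (M *ᵥ d)]
  ring

variable [DecidableEq ι] {ν : Measure (ι → ℝ)}

namespace IsCenteredIsotropic

lemma integrable_secondOrderPoly [IsFiniteMeasure ν] (hν : IsCenteredIsotropic ν) (y : ℝ)
    (z : ι → ℝ) (M : Matrix ι ι ℝ) : Integrable (secondOrderPoly y z M) ν :=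
  ((integrable_const y).add (hν.integrable_dotProduct z)).add
    ((hν.integrable_dotProduct_mulVec M).const_mul _)

lemma integral_secondOrderPoly [IsProbabilityMeasure ν] (hν : IsCenteredIsotropic ν) (y : ℝ)
    (z : ι → ℝ) (M : Matrix ι ι ℝ) :
    ∫ w, secondOrderPoly y z M w ∂ν = y + 1 / 2 * M.trace := by
  have hlin : Integrable (fun w => y + z ⬝ᵥ w) ν :=
    (integrable_const y).add (hν.integrable_dotProduct z)
  simp only [secondOrderPoly]
  rw [integral_add hlin ((hν.integrable_dotProduct_mulVec M).const_mul _),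
    integral_add (integrable_const y) (hν.integrable_dotProduct z), integral_const_mul,
    hν.integral_dotProduct, hν.integral_dotProduct_mulVec, integral_const, probReal_univ,
    one_smul, add_zero]

lemma integrable_secondOrderPoly_add [IsFiniteMeasure ν] (hν : IsCenteredIsotropic ν) (y : ℝ)
    (z : ι → ℝ) (M : Matrix ι ι ℝ) (d : ι → ℝ) :
    Integrable (fun w => secondOrderPoly y z M (w + d)) ν := by
  simp only [secondOrderPoly_add]
  exact hν.integrable_secondOrderPoly _ _ M

lemma integral_secondOrderPoly_add [IsProbabilityMeasure ν] (hν : IsCenteredIsotropic ν) (y : ℝ)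
    (z : ι → ℝ) (M : Matrix ι ι ℝ) (d : ι → ℝ) :
    ∫ w, secondOrderPoly y z M (w + d) ∂ν = secondOrderPoly y z M d + 1 / 2 * M.trace := by
  simp only [secondOrderPoly_add]
  exact hν.integral_secondOrderPoly _ _ M

lemma secondOrderPoly_sub_integral [IsProbabilityMeasure ν] (hν : IsCenteredIsotropic ν) (y : ℝ)
    (z : ι → ℝ) (M : Matrix ι ι ℝ) (u d : ι → ℝ) :
    secondOrderPoly y z M u - ∫ w, secondOrderPoly y z M (w + d) ∂ν =
      z ⬝ᵥ u - z ⬝ᵥ d + 1 / 2 * trace (M * (vecMulVec u u - 1 - vecMulVec d d)) := by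
  rw [hν.integral_secondOrderPoly_add]
  simp only [secondOrderPoly, Matrix.mul_sub, Matrix.mul_one, mul_vecMulVec, trace_sub,
    trace_vecMulVec, dotProduct_comm (M *ᵥ _)]
  ring

end IsCenteredIsotropic

end SecondOrderPoly

section Measurability

variable {α l m n R : Type*} {mα : MeasurableSpace α} [Fintype n] [MeasurableSpace R]

lemma measurable_dotProduct [NonUnitalNonAssocSemiring R] [MeasurableMul₂ R] [MeasurableAdd₂ R]
    {u v : α → n → R} (hu : Measurable u) (hv : Measurable v) :
    Measurable fun a => u a ⬝ᵥ v a := by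
  unfold dotProduct
  fun_prop

lemma measurable_mulVec [NonUnitalNonAssocSemiring R] [MeasurableMul₂ R] [MeasurableAdd₂ R]
    {A : α → Matrix m n R} {v : α → n → R}
    (hA : ∀ i j, Measurable fun a => A a i j) (hv : Measurable v) :
    Measurable fun a => A a *ᵥ v a :=
  measurable_pi_lambda _ fun i => measurable_dotProduct (measurable_pi_lambda _ (hA i)) hv

lemma measurable_matrix_mul_apply [NonUnitalNonAssocSemiring R] [MeasurableMul₂ R]
    [MeasurableAdd₂ R] {A : α → Matrix l n R} {B : α → Matrix n m R}
    (hA : ∀ i j, Measurable fun a => A a i j) (hB : ∀ i j, Measurable fun a => B a i j)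
    (i : l) (j : m) : Measurable fun a => (A a * B a) i j := by
  simp only [mul_apply]
  exact Finset.measurable_sum _ fun k _ => (hA i k).mul (hB k j)

lemma measurable_matrix_det [DecidableEq n] [CommRing R] [MeasurableMul₂ R] [MeasurableAdd₂ R]
    {A : α → Matrix n n R} (hA : ∀ i j, Measurable fun a => A a i j) :
    Measurable fun a => (A a).det := by
  simp only [det_apply']
  exact Finset.measurable_sum _ fun σ _ =>
    (Finset.measurable_prod _ fun i _ => hA (σ i) i).const_mul _

lemma measurable_matrix_inv_apply [DecidableEq n] [Field R] [MeasurableMul₂ R] [MeasurableAdd₂ R]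
    [MeasurableInv R] {A : α → Matrix n n R} (hA : ∀ i j, Measurable fun a => A a i j) (i j : n) :
    Measurable fun a => (A a)⁻¹ i j := by
  simp only [inv_def, Matrix.smul_apply, Ring.inverse_eq_inv', smul_eq_mul, adjugate_apply]
  refine (measurable_matrix_det hA).inv.mul (measurable_matrix_det fun k l => ?_)
  obtain rfl | hk := eq_or_ne k j
  · simp only [updateRow_self, measurable_const]
  · simpa only [updateRow_ne hk] using hA k l

lemma measurable_secondOrderPoly {y : α → ℝ} {z w : α → n → ℝ} {M : α → Matrix n n ℝ}
    (hy : Measurable y) (hz : Measurable z) (hM : ∀ i j, Measurable fun a => M a i j)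
    (hw : Measurable w) : Measurable fun a => secondOrderPoly (y a) (z a) (M a) (w a) :=
  (hy.add (measurable_dotProduct hz hw)).add
    ((measurable_dotProduct hw (measurable_mulVec hM hw)).const_mul _)

end Measurability

lemma measurable_grad {n : ℕ} (f : (Fin n → ℝ) → ℝ) : Measurable (grad f) :=
  measurable_pi_lambda _ fun i => measurable_fderiv_apply_const ℝ f (Pi.single i 1)

lemma measurable_hess_apply {n : ℕ} (f : (Fin n → ℝ) → ℝ) (i j : Fin n) :
    Measurable fun x => hess f x i j :=
  measurable_fderiv_apply_const ℝ (fun y => fderiv ℝ f y (Pi.single j 1)) (Pi.single i 1)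

section Residual

variable {Ω ι : Type*} [Fintype ι] [DecidableEq ι] {𝒢 mΩ : MeasurableSpace Ω} {P : Measure Ω}
  [IsProbabilityMeasure P] {W D : Ω → ι → ℝ} {Y : Ω → ℝ} {Z : Ω → ι → ℝ} {M : Ω → Matrix ι ι ℝ}

lemma condExp_sub_secondOrderPoly (h𝒢 : 𝒢 ≤ mΩ) (hW : Measurable W)
    (hν : IsCenteredIsotropic (P.map W)) (hind : Indep (MeasurableSpace.comap W inferInstance) 𝒢 P)
    {f : Ω → (ι → ℝ) → ℝ} (hf : Measurable[𝒢.prod inferInstance] (Function.uncurry f))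
    (hD : Measurable[𝒢] D) (hY : Measurable[𝒢] Y) (hZ : Measurable[𝒢] Z)
    (hM : ∀ i j, Measurable[𝒢] fun ω => M ω i j)
    (herr : Integrable
      (fun ω => f ω (W ω) - secondOrderPoly (Y ω) (Z ω) (M ω) (W ω + D ω)) P) :
    P[fun ω => f ω (W ω) - secondOrderPoly (Y ω) (Z ω) (M ω) (W ω + D ω) | 𝒢] =ᵐ[P]
      fun ω => ∫ w, f ω w ∂P.map W
        - ∫ w, secondOrderPoly (Y ω) (Z ω) (M ω) (w + D ω) ∂P.map W := by
  have : IsProbabilityMeasure (P.map W) := Measure.isProbabilityMeasure_map hW.aemeasurable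
  have hmeas : StronglyMeasurable[𝒢.prod inferInstance] (Function.uncurry fun ω w =>
      f ω w - secondOrderPoly (Y ω) (Z ω) (M ω) (w + D ω)) :=
    (hf.sub (measurable_secondOrderPoly (hY.comp measurable_fst) (hZ.comp measurable_fst)
      (fun i j => (hM i j).comp measurable_fst)
      (measurable_snd.add (hD.comp measurable_fst)))).stronglyMeasurable
  filter_upwards [condExp_of_indep h𝒢 hW hind hmeas herr,
    ae_integrable_of_indep h𝒢 hW hind hmeas herr] with ω hcond hfib
  have hpoly := hν.integrable_secondOrderPoly_add (Y ω) (Z ω) (M ω) (D ω)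
  have hfω : Integrable (f ω) (P.map W) :=
    (hfib.add hpoly).congr (.of_forall fun w => sub_add_cancel _ _)
  rw [hcond, integral_sub hfω hpoly]

theorem drifted_taylor_estimator_residual_general {E E' : Type*} [MeasurableSpace E]
    [MeasurableSpace E'] (h𝒢 : 𝒢 ≤ mΩ) (hWmeas : Measurable W)
    {ν : Measure (ι → ℝ)} (hν : IsCenteredIsotropic ν) (hWlaw : P.map W = ν)
    (hWindep : Indep (MeasurableSpace.comap W inferInstance) 𝒢 P)
    {X : Ω → E} (hX : Measurable[𝒢] X) {T : E → (ι → ℝ) → E'}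
    (hT : Measurable (Function.uncurry T)) {L : E → ℝ}
    (hD : Measurable[𝒢] D) {WP : Ω → ι → ℝ} (hWP : ∀ ω, WP ω = W ω + D ω)
    {X' : Ω → E'} (hX' : ∀ ω, X' ω = T (X ω) (W ω))
    {V' : E' → ℝ} (hV'meas : Measurable V')
    {V : E → ℝ} (hV : ∀ x, V x = L x + ∫ w, V' (T x w) ∂ν)
    (hY : Measurable[𝒢] Y) (hZ : Measurable[𝒢] Z) (hM : ∀ i j, Measurable[𝒢] fun ω => M ω i j)
    {δ : Ω → ℝ} (hδ : ∀ ω, δ ω = V' (X' ω) - secondOrderPoly (Y ω) (Z ω) (M ω) (WP ω))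
    {ΔY : Ω → ℝ} (hΔY : ∀ ω, ΔY ω = V' (X' ω) - V (X ω))
    {ΔYd : Ω → ℝ} (hΔYd : ∀ ω, ΔYd ω = -L (X ω) + Z ω ⬝ᵥ WP ω - Z ω ⬝ᵥ D ω
      + 1 / 2 * trace (M ω * (vecMulVec (WP ω) (WP ω) - 1 - vecMulVec (D ω) (D ω))))
    (hδint : Integrable δ P) :
    (fun ω => ΔY ω - ΔYd ω) =ᵐ[P] fun ω => δ ω - (P[δ|𝒢]) ω := by
  subst hWlaw
  obtain rfl : WP = fun ω => W ω + D ω := funext hWP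
  have : IsProbabilityMeasure (P.map W) := Measure.isProbabilityMeasure_map hWmeas.aemeasurable
  obtain rfl : δ = fun ω => V' (T (X ω) (W ω)) - secondOrderPoly (Y ω) (Z ω) (M ω) (W ω + D ω) :=
    funext fun ω => by rw [hδ, hX']
  have hstep : Measurable[𝒢.prod inferInstance] (Function.uncurry fun ω w => V' (T (X ω) w)) :=
    hV'meas.comp (hT.comp ((hX.comp measurable_fst).prodMk measurable_snd))
  filter_upwards [condExp_sub_secondOrderPoly h𝒢 hWmeas hν hWindep hstep hD hY hZ hM hδint]
    with ω hcond
  have hcentred := hν.secondOrderPoly_sub_integral (Y ω) (Z ω) (M ω) (W ω + D ω) (D ω)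
  rw [hcond, hΔY, hΔYd, hX', hV]
  linarith

end Residual

/-- **Residual error of the drifted Taylor estimator.**
With the drifted one-step Bellman setup (drift `K`, `D := Σ(X)⁻¹(F(X) − K)` bounded,
`W^P := W + D`, `X̄^P := X + K`), the drifted Taylor estimator satisfies
`ΔY − ΔŶ^drift = δ − E[δ | 𝒢]` almost surely, where `ΔY := V'(X') − V(X)`. -/
theorem drifted_taylor_estimator_residual
    {Ω : Type*} (𝒢 : MeasurableSpace Ω) [mΩ : MeasurableSpace Ω]
    (P : Measure Ω) [IsProbabilityMeasure P]
    {n : ℕ} (h𝒢 : 𝒢 ≤ mΩ)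
    -- the noise W : i.i.d. standard normal coordinates, independent of 𝒢
    (W : Ω → Fin n → ℝ) (hWmeas : Measurable W)
    (hWlaw : Measure.map W P = stdGaussian n)
    (hWindep : Indep (MeasurableSpace.comap W inferInstance) 𝒢 P)
    -- the current state X and the drift K are 𝒢-measurable; dynamics data F, Σ, L
    (X K : Ω → Fin n → ℝ) (hX : Measurable[𝒢] X) (hK : Measurable[𝒢] K)
    (F : (Fin n → ℝ) → Fin n → ℝ) (hF : Measurable F)
    (S : (Fin n → ℝ) → Matrix (Fin n) (Fin n) ℝ) (hS : ∀ i j, Measurable fun x => S x i j)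
    (hSinv : ∀ᵐ ω ∂P, IsUnit (S (X ω)).det)
    (L : (Fin n → ℝ) → ℝ) (hL : Measurable L)
    -- D := Σ(X)⁻¹ (F(X) − K), bounded; W^P := W + D; X̄^P := X + K
    (D : Ω → Fin n → ℝ) (hD : ∀ ω, D ω = (S (X ω))⁻¹.mulVec (F (X ω) - K ω))
    (hDbound : ∃ C, ∀ ω i, |D ω i| ≤ C)
    (WP : Ω → Fin n → ℝ) (hWP : ∀ ω, WP ω = W ω + D ω)
    (XbP : Ω → Fin n → ℝ) (hXbP : ∀ ω, XbP ω = X ω + K ω)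
    (X' : Ω → Fin n → ℝ) (hX' : ∀ ω, X' ω = X ω + F (X ω) + (S (X ω)).mulVec (W ω))
    -- the next-step value function V' and the one-step Bellman value V
    (V' : (Fin n → ℝ) → ℝ) (hV'meas : Measurable V')
    (hV'int : Integrable (fun ω => V' (X' ω)) P)
    (V : (Fin n → ℝ) → ℝ)
    (hV : ∀ x, V x = L x + ∫ w, V' (x + F x + (S x).mulVec w) ∂(stdGaussian n))
    -- the C² value function approximation Ṽ and associated Ȳ, Z̄, M̄ (centered at X̄^P)
    (Vt : (Fin n → ℝ) → ℝ) (hVt : ContDiff ℝ 2 Vt)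
    (hVtint : Integrable (fun ω => Vt (X' ω)) P)
    (Zb : Ω → Fin n → ℝ) (hZb : ∀ ω, Zb ω = (S (X ω))ᵀ.mulVec (grad Vt (XbP ω)))
    (Mb : Ω → Matrix (Fin n) (Fin n) ℝ)
    (hMb : ∀ ω, Mb ω = (S (X ω))ᵀ * hess Vt (XbP ω) * S (X ω))
    (hZbint : ∀ i, Integrable (fun ω => Zb ω i) P)
    (hMbint : ∀ i j, Integrable (fun ω => Mb ω i j) P)
    -- the error term δ
    (δ : Ω → ℝ)
    (hδ : ∀ ω, δ ω = V' (X' ω) - (Vt (XbP ω) + (∑ i, Zb ω i * WP ω i)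
      + (1 / 2) * ∑ i, WP ω i * (Mb ω).mulVec (WP ω) i))
    -- the true backward difference ΔY and the drifted Taylor estimator ΔŶ^drift
    (ΔY : Ω → ℝ) (hΔY : ∀ ω, ΔY ω = V' (X' ω) - V (X ω))
    (ΔYd : Ω → ℝ)
    (hΔYd : ∀ ω, ΔYd ω = -L (X ω) + (∑ i, Zb ω i * WP ω i) - (∑ i, Zb ω i * D ω i)
      + (1 / 2) * Matrix.trace (Mb ω *
        (Matrix.vecMulVec (WP ω) (WP ω) - 1 - Matrix.vecMulVec (D ω) (D ω))))
    -- integrability of all displayed random variables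
    (hΔYint : Integrable ΔY P) (hΔYdint : Integrable ΔYd P)
    (hδint : Integrable δ P)
    (hLint : Integrable (fun ω => L (X ω)) P)
    (hVint : Integrable (fun ω => V (X ω)) P) :
    (fun ω => ΔY ω - ΔYd ω) =ᵐ[P] (fun ω => δ ω - (P[δ|𝒢]) ω) := by
  have hS' (i j) : Measurable[𝒢] fun ω => S (X ω) i j := (hS i j).comp hX
  have hXK : Measurable[𝒢] XbP := funext hXbP ▸ hX.add hK
  have hT : Measurable (Function.uncurry fun x w => x + F x + S x *ᵥ w) :=
    (measurable_fst.add (hF.comp measurable_fst)).add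
      (measurable_mulVec (fun i j => (hS i j).comp measurable_fst) measurable_snd)
  have hDmeas : Measurable[𝒢] D := funext hD ▸
    measurable_mulVec (measurable_matrix_inv_apply hS') ((hF.comp hX).sub hK)
  have hZmeas : Measurable[𝒢] Zb := funext hZb ▸
    measurable_mulVec (fun i j => hS' j i) ((measurable_grad Vt).comp hXK)
  have hMmeas (i j) : Measurable[𝒢] fun ω => Mb ω i j := funext hMb ▸
    measurable_matrix_mul_apply (measurable_matrix_mul_apply (fun i j => hS' j i)
      fun i j => (measurable_hess_apply Vt i j).comp hXK) hS' i j
  exact drifted_taylor_estimator_residual_general h𝒢 hWmeas (isCenteredIsotropic_stdGaussian n)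
    hWlaw hWindep hX hT hDmeas hWP hX' hV'meas hV (hVt.continuous.measurable.comp hXK)
    hZmeas hMmeas hδ hΔY hΔYd hδint
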